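/- (Elliptic soliton solution of Hirota's bilinear discrete KP equation.) The τ-function satisfies, at every (n,m,h) ∈ ℤ³, the bilinear three-term equation χ_{−δ,ε}(ξ+δ)·τ̄·τ̂̃ = χ_{−λ,ε}(ξ+λ)·τ̃·τ̂̄ + χ_{−δ,λ}(ξ+δ)·τ̂·τ̃̄, where χ_{α,β}(ξ) = ζ(α) + ζ(β) + ζ(ξ) − ζ(ξ+α+β), τ̃, τ̂, τ̄ denote τ evaluated at (n+1,m,h), (n,m+1,h), (n,m,h+1), and τ̂̃, τ̃̄, τ̂̄ at (n+1,m+1,h), (n+1,m,h+1), (n,m+1,h+1). (This is the precise, gauge-exact form of Hirota's DAGTE equation (2.48) of the paper; in the elliptic case the coefficients depend on ξ and do not sum to zero.) -/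

import Mathlib

open scoped BigOperators

noncomputable section

/-- A period lattice in `ℂ` spanned by two `ℝ`-independent periods. -/
structure EllLattice where
  ω₁ : ℂ
  ω₂ : ℂ
  indep : ∀ a b : ℝ, a • ω₁ + b • ω₂ = 0 → a = 0 ∧ b = 0

namespace EllLattice

/-- Membership in the lattice `Λ = ℤω₁ + ℤω₂`. -/
def mem (L : EllLattice) (z : ℂ) : Prop := ∃ m n : ℤ, z = m • L.ω₁ + n • L.ω₂

/-- The lattice point with integer coordinates `p = (m, n)`. -/
def per (L : EllLattice) (p : ℤ × ℤ) : ℂ := p.1 • L.ω₁ + p.2 • L.ω₂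

/-- The Weierstrass sigma function associated to the lattice, defined by its
Hadamard product over the nonzero lattice points. -/
def sigma (L : EllLattice) (z : ℂ) : ℂ :=
  z * ∏' p : {p : ℤ × ℤ // p ≠ 0},
      ((1 - z / L.per p.1) *
        Complex.exp (z / L.per p.1 + z ^ 2 / (2 * (L.per p.1) ^ 2)))

/-- The Weierstrass zeta function `ζ = σ′/σ`. -/
def zeta (L : EllLattice) (z : ℂ) : ℂ := deriv L.sigma z / L.sigma z

/-- The Weierstrass `℘`-function `℘ = −ζ′`. -/
def wp (L : EllLattice) (z : ℂ) : ℂ := - deriv L.zeta z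

/-- `Φ_ξ(κ) = σ(ξ+κ)/(σ(ξ)σ(κ))`. -/
def Phi (L : EllLattice) (ξ κ : ℂ) : ℂ := L.sigma (ξ + κ) / (L.sigma ξ * L.sigma κ)

/-- The Lamé function `Ψ_ξ(κ) = Φ_ξ(κ)·e^{−ζ(ξ)κ}`. -/
def Psi (L : EllLattice) (ξ κ : ℂ) : ℂ := L.Phi ξ κ * Complex.exp (-(L.zeta ξ) * κ)

/-- `η_δ(ξ) = ζ(ξ+δ) − ζ(ξ) − ζ(δ)`. -/
def eta (L : EllLattice) (δ ξ : ℂ) : ℂ := L.zeta (ξ + δ) - L.zeta ξ - L.zeta δ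

/-- `χ_{α,β}(ξ) = ζ(α) + ζ(β) + ζ(ξ) − ζ(ξ+α+β)`. -/
def chi (L : EllLattice) (α β ξ : ℂ) : ℂ :=
  L.zeta α + L.zeta β + L.zeta ξ - L.zeta (ξ + α + β)

end EllLattice

open Matrix

/-- All the data entering the elliptic (N,N′)-soliton solutions of the lattice KP system:
a period lattice, lattice parameters `δ, ε, λ`, a base point `ξ₀`, rapidity parameters
`κ_i, κ′_j`, initial plane-wave constants `ρ⁰_i, ν⁰_j` and a constant `N′×N` matrix `C`. -/
structure KPData (N N' : ℕ) where
  L : EllLattice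
  del : ℂ
  eps : ℂ
  lam : ℂ
  xi0 : ℂ
  κ : Fin N → ℂ
  κ' : Fin N' → ℂ
  ρ0 : Fin N → ℂ
  ν0 : Fin N' → ℂ
  C : Matrix (Fin N') (Fin N) ℂ

namespace KPData

variable {N N' : ℕ}

/-- `ξ = ξ₀ + nδ + mε + hλ`. -/
def xi (D : KPData N N') (n m h : ℤ) : ℂ :=
  D.xi0 + n • D.del + m • D.eps + h • D.lam

/-- The plane-wave factor `ρ_i(n,m,h)`. -/
def ρ (D : KPData N N') (i : Fin N) (n m h : ℤ) : ℂ :=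
  (Complex.exp (-(D.L.zeta D.del) * D.κ i) * D.L.Psi D.del (-(D.κ i))) ^ n *
  (Complex.exp (-(D.L.zeta D.eps) * D.κ i) * D.L.Psi D.eps (-(D.κ i))) ^ m *
  (Complex.exp (-(D.L.zeta D.lam) * D.κ i) * D.L.Psi D.lam (-(D.κ i))) ^ h *
  Complex.exp (D.L.zeta (D.xi n m h) * D.κ i) * D.ρ0 i

/-- The plane-wave factor `ν_j(n,m,h)`. -/
def ν (D : KPData N N') (j : Fin N') (n m h : ℤ) : ℂ :=
  (Complex.exp (D.L.zeta D.del * D.κ' j) * D.L.Psi D.del (D.κ' j)) ^ (-n) *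
  (Complex.exp (D.L.zeta D.eps * D.κ' j) * D.L.Psi D.eps (D.κ' j)) ^ (-m) *
  (Complex.exp (D.L.zeta D.lam * D.κ' j) * D.L.Psi D.lam (D.κ' j)) ^ (-h) *
  Complex.exp (D.L.zeta (D.xi n m h) * D.κ' j) * D.ν0 j

/-- The dressed elliptic Cauchy matrix `M_{ij} = ρ_i Ψ_ξ(κ_i + κ′_j) ν_j`. -/
def M (D : KPData N N') (n m h : ℤ) : Matrix (Fin N) (Fin N') ℂ :=
  Matrix.of fun i j => D.ρ i n m h * D.L.Psi (D.xi n m h) (D.κ i + D.κ' j) * D.ν j n m h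

/-- The column vector `r = (ρ_i Ψ_ξ(κ_i))_i`. -/
def r (D : KPData N N') (n m h : ℤ) : Fin N → ℂ :=
  fun i => D.ρ i n m h * D.L.Psi (D.xi n m h) (D.κ i)

/-- The column vector `s = (ν_j Ψ_ξ(κ′_j))_j`. -/
def s (D : KPData N N') (n m h : ℤ) : Fin N' → ℂ :=
  fun j => D.ν j n m h * D.L.Psi (D.xi n m h) (D.κ' j)

/-- The τ-function `τ = det(1 + MC)`. -/
def τ (D : KPData N N') (n m h : ℤ) : ℂ := (1 + D.M n m h * D.C).det

/-- The diagonal matrix `χ_{α,K}(ξ) = diag(χ_{α,κ_i}(ξ))`. -/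
def DK (D : KPData N N') (α : ℂ) (n m h : ℤ) : Matrix (Fin N) (Fin N) ℂ :=
  Matrix.diagonal fun i => D.L.chi α (D.κ i) (D.xi n m h)

/-- The diagonal matrix `χ_{β,K′}(ξ) = diag(χ_{β,κ′_j}(ξ))`. -/
def DK' (D : KPData N N') (β : ℂ) (n m h : ℤ) : Matrix (Fin N') (Fin N') ℂ :=
  Matrix.diagonal fun j => D.L.chi β (D.κ' j) (D.xi n m h)

/-- `W_β = 1 − sᵀ (χ_{β,K′}(ξ))⁻¹ C (1+MC)⁻¹ r`. -/
def W (D : KPData N N') (β : ℂ) (n m h : ℤ) : ℂ :=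
  1 - D.s n m h ⬝ᵥ ((D.DK' β n m h)⁻¹ *ᵥ (D.C *ᵥ ((1 + D.M n m h * D.C)⁻¹ *ᵥ D.r n m h)))

/-- `V_α = 1 − sᵀ (1+CM)⁻¹ C (χ_{α,K}(ξ))⁻¹ r`. -/
def V (D : KPData N N') (α : ℂ) (n m h : ℤ) : ℂ :=
  1 - D.s n m h ⬝ᵥ ((1 + D.C * D.M n m h)⁻¹ *ᵥ (D.C *ᵥ ((D.DK α n m h)⁻¹ *ᵥ D.r n m h)))

/-- `w₀ = sᵀ C (1+MC)⁻¹ r`. -/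
def w0 (D : KPData N N') (n m h : ℤ) : ℂ :=
  D.s n m h ⬝ᵥ (D.C *ᵥ ((1 + D.M n m h * D.C)⁻¹ *ᵥ D.r n m h))

/-- `w = ζ(ξ) − w₀ − nζ(δ) − mζ(ε) − hζ(λ)`. -/
def w (D : KPData N N') (n m h : ℤ) : ℂ :=
  D.L.zeta (D.xi n m h) - D.w0 n m h - n • D.L.zeta D.del - m • D.L.zeta D.eps -
    h • D.L.zeta D.lam

/-- `S_{β,α} = sᵀ (χ_{β,K′}(ξ))⁻¹ C (1+MC)⁻¹ (χ_{α,K}(ξ))⁻¹ r`. -/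
def S (D : KPData N N') (β α : ℂ) (n m h : ℤ) : ℂ :=
  D.s n m h ⬝ᵥ ((D.DK' β n m h)⁻¹ *ᵥ
    (D.C *ᵥ ((1 + D.M n m h * D.C)⁻¹ *ᵥ ((D.DK α n m h)⁻¹ *ᵥ D.r n m h))))

/-- `u_α = (1+MC)⁻¹ (χ_{α,K}(ξ))⁻¹ r`. -/
def u (D : KPData N N') (α : ℂ) (n m h : ℤ) : Fin N → ℂ :=
  (1 + D.M n m h * D.C)⁻¹ *ᵥ ((D.DK α n m h)⁻¹ *ᵥ D.r n m h)

/-- `u₀ = (1+MC)⁻¹ r`. -/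
def u0 (D : KPData N N') (n m h : ℤ) : Fin N → ℂ :=
  (1 + D.M n m h * D.C)⁻¹ *ᵥ D.r n m h

/-- the adjoint (row) vector `ᵗu_β = sᵀ (χ_{β,K′}(ξ))⁻¹ (1+CM)⁻¹`. -/
def tu (D : KPData N N') (β : ℂ) (n m h : ℤ) : Fin N' → ℂ :=
  (D.s n m h ᵥ* (D.DK' β n m h)⁻¹) ᵥ* (1 + D.C * D.M n m h)⁻¹

/-- the adjoint (row) vector `ᵗu₀ = sᵀ (1+CM)⁻¹`. -/
def tu0 (D : KPData N N') (n m h : ℤ) : Fin N' → ℂ :=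
  D.s n m h ᵥ* (1 + D.C * D.M n m h)⁻¹

/-- The gauge variable `𝒱_α = Φ_ξ(α)·V_α`. -/
def calV (D : KPData N N') (α : ℂ) (n m h : ℤ) : ℂ :=
  D.L.Phi (D.xi n m h) α * D.V α n m h

/-- The gauge variable `𝒲_β = Φ_ξ(β)·W_β`. -/
def calW (D : KPData N N') (β : ℂ) (n m h : ℤ) : ℂ :=
  D.L.Phi (D.xi n m h) β * D.W β n m h

/-- The Schwarzian variable `Z_{β,α} = Φ_ξ(α+β)·(1 − χ_{α,β}(ξ)·S_{β,α})`. -/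
def Z (D : KPData N N') (β α : ℂ) (n m h : ℤ) : ℂ :=
  D.L.Phi (D.xi n m h) (α + β) * (1 - D.L.chi α β (D.xi n m h) * D.S β α n m h)

/-- Genericity of the parameters (together with finitely many auxiliary points `extra`):
no nontrivial integer combination of `ξ₀, δ, ε, λ`, the rapidity parameters and the
auxiliary points lies on the lattice.  In particular all arguments of `σ` occurring in
the soliton solutions and their shifts lie outside `Λ`. -/
def Generic {P : ℕ} (D : KPData N N') (extra : Fin P → ℂ) : Prop :=
  ∀ (c0 cn cm ch : ℤ) (a : Fin N → ℤ) (b : Fin N' → ℤ) (e : Fin P → ℤ),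
    ¬ (c0 = 0 ∧ cn = 0 ∧ cm = 0 ∧ ch = 0 ∧ a = 0 ∧ b = 0 ∧ e = 0) →
    ¬ D.L.mem (c0 • D.xi0 + cn • D.del + cm • D.eps + ch • D.lam +
      (∑ i, a i • D.κ i) + (∑ j, b j • D.κ' j) + ∑ t, e t • extra t)

end KPData

/-!
Seen from the lattice point `(n, m, h + 1)`, passing to one of the other five points of the equation
replaces `ξ` by `ξ + p - q`, once or twice, with `p ∈ {δ, ε}` and `q ∈ {λ, 0}`. By Fay's identity,
equivalent to the three-term identity for `σ`, such a shift subtracts a rank-one matrix from the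
dressed Cauchy matrix, as a Schur complement does. The tau functions are therefore minors of one
bordered determinant, and Jacobi's identity for it is the bilinear equation; differentiating Fay's
identity writes the coefficients `χ` as the required products of `Φ`. The three-term identity
itself holds because two of its terms together, divided by the third, form an entire doubly periodic
function.
-/

open Filter Topology

/-! ### The sigma and zeta functions -/

/-- The elementary Weierstrass factor `E₂(w) = (1 - w) exp (w + w² / 2)` of genus two. -/
def weierstrassFactor (w : ℂ) : ℂ := (1 - w) * Complex.exp (w + w ^ 2 / 2)

theorem weierstrassFactor_zero : weierstrassFactor 0 = 1 := by
  simp [weierstrassFactor]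

theorem weierstrassFactor_eq_zero_iff {w : ℂ} : weierstrassFactor w = 0 ↔ w = 1 := by
  simp [weierstrassFactor, sub_eq_zero, eq_comm (a := w)]

theorem hasDerivAt_weierstrassFactor (w : ℂ) :
    HasDerivAt weierstrassFactor (-(w ^ 2 * Complex.exp (w + w ^ 2 / 2))) w := by
  have hexponent : HasDerivAt (fun z : ℂ => z + z ^ 2 / 2) (1 + w) w := by
    simpa using! (hasDerivAt_id w).add ((hasDerivAt_pow 2 w).div_const 2)
  exact (((hasDerivAt_id w).const_sub 1).mul hexponent.cexp).congr_deriv (by simp; ring)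

theorem differentiable_weierstrassFactor : Differentiable ℂ weierstrassFactor :=
  fun w => (hasDerivAt_weierstrassFactor w).differentiableAt

theorem norm_weierstrassFactor_sub_one_le {w : ℂ} (hw : ‖w‖ ≤ 1) :
    ‖weierstrassFactor w - 1‖ ≤ Real.exp 2 * ‖w‖ ^ 3 := by
  have hderiv : ∀ z ∈ Metric.closedBall (0 : ℂ) ‖w‖,
      ‖-(z ^ 2 * Complex.exp (z + z ^ 2 / 2))‖ ≤ ‖w‖ ^ 2 * Real.exp 2 := by
    intro z hz
    have hzw : ‖z‖ ≤ ‖w‖ := by simpa using hz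
    have hexponent : ‖z + z ^ 2 / 2‖ ≤ 2 := by
      calc ‖z + z ^ 2 / 2‖ ≤ ‖z‖ + ‖z ^ 2 / 2‖ := norm_add_le _ _
        _ = ‖z‖ + ‖z‖ ^ 2 / 2 := by simp
        _ ≤ 2 := by nlinarith [norm_nonneg z]
    rw [norm_neg, norm_mul, norm_pow]
    gcongr
    exact (Complex.norm_exp_le_exp_norm _).trans (Real.exp_le_exp.mpr hexponent)
  calc ‖weierstrassFactor w - 1‖ = ‖weierstrassFactor w - weierstrassFactor 0‖ := by
        rw [weierstrassFactor_zero]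
    _ ≤ ‖w‖ ^ 2 * Real.exp 2 * ‖w - 0‖ :=
        (convex_closedBall 0 ‖w‖).norm_image_sub_le_of_norm_hasDerivWithin_le
          (fun z _ => (hasDerivAt_weierstrassFactor z).hasDerivWithinAt) hderiv
          (by simp) (by simp)
    _ = Real.exp 2 * ‖w‖ ^ 3 := by rw [sub_zero]; ring

theorem logDeriv_weierstrassFactor_div {z l : ℂ} (hl : l ≠ 0) (hzl : z ≠ l) :
    logDeriv (fun z => weierstrassFactor (z / l)) z = 1 / (z - l) + 1 / l + z / l ^ 2 := by
  have hquot : HasDerivAt (fun z => z / l) (1 / l) z := (hasDerivAt_id z).div_const l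
  have hfactor : HasDerivAt (fun z => weierstrassFactor (z / l))
      (-((z / l) ^ 2 * Complex.exp (z / l + (z / l) ^ 2 / 2)) * (1 / l)) z :=
    HasDerivAt.comp (h₂ := weierstrassFactor) z (hasDerivAt_weierstrassFactor (z / l)) hquot
  have hz : z - l ≠ 0 := sub_ne_zero.mpr hzl
  have hz' : 1 - z / l ≠ 0 := by
    rw [one_sub_div hl]
    exact div_ne_zero (sub_ne_zero.mpr hzl.symm) hl
  have hz'' : l - z ≠ 0 := sub_ne_zero.mpr hzl.symm
  rw [logDeriv_apply, hfactor.deriv, weierstrassFactor, div_eq_iff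
    (mul_ne_zero hz' (Complex.exp_ne_zero _))]
  field_simp [hz'']
  ring

namespace EllLattice

variable (L : EllLattice)

/-- The lattice data as a Mathlib `PeriodPair`, which gives access to its lattice-sum estimates. -/
def periodPair : PeriodPair where
  ω₁ := L.ω₁
  ω₂ := L.ω₂
  indep := LinearIndependent.pair_iff.mpr L.indep

theorem mem_iff {z : ℂ} : L.mem z ↔ z ∈ L.periodPair.lattice := by
  simp only [PeriodPair.mem_lattice, mem, zsmul_eq_mul, periodPair, eq_comm]

/-- The elementary factors of `σ`, indexed by all lattice points. The factor at `l = 0` is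
`E₂(z / 0) = E₂(0) = 1`, so it does not affect the product. -/
def sigmaFactor (l : L.periodPair.lattice) (z : ℂ) : ℂ := weierstrassFactor (z / l)

variable {L} in
theorem sigmaFactor_eq_zero_iff {l : L.periodPair.lattice} {z : ℂ} :
    L.sigmaFactor l z = 0 ↔ z = l ∧ l ≠ 0 := by
  rw [sigmaFactor, weierstrassFactor_eq_zero_iff]
  by_cases hl : (l : ℂ) = 0
  · simp [hl, Subtype.ext_iff]
  · simp [div_eq_one_iff_eq hl, Subtype.ext_iff, hl]

theorem differentiable_sigmaFactor (l : L.periodPair.lattice) :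
    Differentiable ℂ (L.sigmaFactor l) :=
  differentiable_weierstrassFactor.comp (differentiable_id.div_const _)

theorem eventually_lt_norm_lattice (r : ℝ) :
    ∀ᶠ l : L.periodPair.lattice in cofinite, r < ‖(l : ℂ)‖ := by
  refine (isCompact_iff_finite.mp
    (isCompact_closedBall (0 : L.periodPair.lattice) r)).subset fun l hl => ?_
  simpa using hl

theorem summable_norm_lattice_inv_cube : Summable fun l : L.periodPair.lattice => ‖l‖⁻¹ ^ 3 :=
  ZLattice.summable_norm_pow_inv _ 3 (by simp)

theorem eventually_norm_sigmaFactor_sub_one_le (r : ℝ) :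
    ∀ᶠ l : L.periodPair.lattice in cofinite, ∀ z ∈ Metric.ball (0 : ℂ) r,
      ‖L.sigmaFactor l z - 1‖ ≤ Real.exp 2 * r ^ 3 * ‖l‖⁻¹ ^ 3 := by
  filter_upwards [L.eventually_lt_norm_lattice r] with l hl z hz
  have hz' : ‖z‖ < r := by simpa using hz
  have hquot : ‖z / (l : ℂ)‖ ≤ r * ‖l‖⁻¹ := by
    rw [norm_div, div_eq_mul_inv]
    exact mul_le_mul_of_nonneg_right hz'.le (by positivity)
  have hquot_le_one : ‖z / (l : ℂ)‖ ≤ 1 := by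
    rw [norm_div]
    exact div_le_one_of_le₀ (by linarith) (norm_nonneg _)
  calc ‖L.sigmaFactor l z - 1‖ ≤ Real.exp 2 * ‖z / (l : ℂ)‖ ^ 3 :=
        norm_weierstrassFactor_sub_one_le hquot_le_one
    _ ≤ Real.exp 2 * (r * ‖l‖⁻¹) ^ 3 := by gcongr
    _ = Real.exp 2 * r ^ 3 * ‖l‖⁻¹ ^ 3 := by ring

theorem summable_norm_sigmaFactor_sub_one (z : ℂ) :
    Summable fun l => ‖L.sigmaFactor l z - 1‖ := by
  refine Summable.of_norm_bounded_eventually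
    (L.summable_norm_lattice_inv_cube.mul_left (Real.exp 2 * (‖z‖ + 1) ^ 3)) ?_
  filter_upwards [L.eventually_norm_sigmaFactor_sub_one_le (‖z‖ + 1)] with l hl
  simpa using hl z (by simp)

theorem hasProdLocallyUniformlyOn_sigmaFactor (r : ℝ) :
    HasProdLocallyUniformlyOn L.sigmaFactor (fun z => ∏' l, L.sigmaFactor l z)
      (Metric.ball 0 r) := by
  simpa using! Summable.hasProdLocallyUniformlyOn_one_add Metric.isOpen_ball
    (L.summable_norm_lattice_inv_cube.mul_left (Real.exp 2 * r ^ 3))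
    (L.eventually_norm_sigmaFactor_sub_one_le r)
    (fun l => ((L.differentiable_sigmaFactor l).continuous.sub continuous_const).continuousOn)

theorem differentiable_tprod_sigmaFactor :
    Differentiable ℂ fun z => ∏' l, L.sigmaFactor l z := by
  intro z
  have hprod := L.hasProdLocallyUniformlyOn_sigmaFactor (‖z‖ + 1)
  rw [hasProdLocallyUniformlyOn_iff_tendstoLocallyUniformlyOn] at hprod
  refine (hprod.differentiableOn (.of_forall fun s => ?_) Metric.isOpen_ball).differentiableAt
    (Metric.isOpen_ball.mem_nhds (by simp))
  exact DifferentiableOn.fun_finsetProd fun l _ => (L.differentiable_sigmaFactor l).differentiableOn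

theorem sigma_eq_mul_tprod (z : ℂ) : L.sigma z = z * ∏' l, L.sigmaFactor l z := by
  let e : ℤ × ℤ ≃ L.periodPair.lattice := L.periodPair.latticeEquivProd.symm.toEquiv
  have he (p : ℤ × ℤ) : (e p : ℂ) = L.per p :=
    (L.periodPair.latticeEquiv_symm_apply p).trans (by simp only [per, zsmul_eq_mul, periodPair])
  have hsupport : Function.mulSupport (fun p => L.sigmaFactor (e p) z) ⊆ {p | p ≠ 0} := by
    rintro _ hp rfl
    exact hp (by simp [sigmaFactor, he, per, weierstrassFactor_zero])
  rw [sigma, ← e.tprod_eq, ← tprod_subtype_eq_of_mulSupport_subset hsupport]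
  congr! 3
  rw [sigmaFactor, he, weierstrassFactor, div_pow, div_div, mul_comm (L.per _ ^ 2)]

theorem differentiable_sigma : Differentiable ℂ L.sigma := by
  rw [funext L.sigma_eq_mul_tprod]
  exact differentiable_id.mul L.differentiable_tprod_sigmaFactor

@[simp]
theorem sigma_zero : L.sigma 0 = 0 := by
  rw [sigma_eq_mul_tprod, zero_mul]

theorem hasDerivAt_sigma_zero : HasDerivAt L.sigma 1 0 := by
  have hprod : ∏' l, L.sigmaFactor l 0 = 1 := by simp [sigmaFactor, weierstrassFactor_zero]
  rw [funext L.sigma_eq_mul_tprod]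
  simpa [hprod] using! (hasDerivAt_id (0 : ℂ)).mul (L.differentiable_tprod_sigmaFactor 0).hasDerivAt

@[simp]
theorem sigma_neg (z : ℂ) : L.sigma (-z) = -L.sigma z := by
  have hprod : ∏' l, L.sigmaFactor l (-z) = ∏' l, L.sigmaFactor l z := by
    rw [← (Equiv.neg L.periodPair.lattice).tprod_eq]
    simp [sigmaFactor, neg_div_neg_eq]
  rw [sigma_eq_mul_tprod, sigma_eq_mul_tprod, hprod, neg_mul]

theorem tprod_sigmaFactor_ne_zero {z : ℂ} (hz : ∀ l, L.sigmaFactor l z ≠ 0) :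
    ∏' l, L.sigmaFactor l z ≠ 0 := by
  simpa using tprod_one_add_ne_zero_of_summable (f := fun l => L.sigmaFactor l z - 1)
    (by simpa using hz) (L.summable_norm_sigmaFactor_sub_one z)

theorem sigma_eq_zero_iff {z : ℂ} : L.sigma z = 0 ↔ z ∈ L.periodPair.lattice := by
  rw [sigma_eq_mul_tprod, mul_eq_zero]
  constructor
  · rintro (rfl | hprod)
    · exact zero_mem _
    · contrapose! hprod
      exact L.tprod_sigmaFactor_ne_zero fun l hl =>
        hprod ((sigmaFactor_eq_zero_iff.mp hl).1 ▸ l.2)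
  · intro hz
    by_cases hz0 : z = 0
    · exact .inl hz0
    · exact .inr <| tprod_of_exists_eq_zero
        ⟨⟨z, hz⟩, sigmaFactor_eq_zero_iff.mpr ⟨rfl, by simpa [Subtype.ext_iff] using hz0⟩⟩

theorem countable_lattice : (L.periodPair.lattice : Set ℂ).Countable :=
  Set.countable_coe_iff.mp (inferInstanceAs (Countable L.periodPair.lattice))

theorem zeta_neg (z : ℂ) : L.zeta (-z) = -L.zeta z := by
  have hderiv : deriv L.sigma (-z) = deriv L.sigma z := by
    have h := deriv_comp_neg L.sigma z
    simp only [sigma_neg, deriv.fun_neg, neg_inj] at h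
    exact h.symm
  rw [zeta, zeta, hderiv, sigma_neg, div_neg]

theorem norm_logDeriv_sigmaFactor_le {z : ℂ} {l : L.periodPair.lattice}
    (hl : 2 * ‖z‖ < ‖(l : ℂ)‖) :
    ‖logDeriv (L.sigmaFactor l) z‖ ≤ 2 * ‖z‖ ^ 2 * ‖l‖⁻¹ ^ 3 := by
  have hl_pos : 0 < ‖(l : ℂ)‖ := by linarith [norm_nonneg z]
  have hl0 : (l : ℂ) ≠ 0 := norm_pos_iff.mp hl_pos
  have hdist : ‖(l : ℂ)‖ / 2 ≤ ‖z - l‖ := by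
    linarith [norm_sub_norm_le (l : ℂ) z, norm_sub_rev (l : ℂ) z]
  have hzl : z - l ≠ 0 := norm_pos_iff.mp (by linarith)
  have hsum : 1 / (z - l) + 1 / (l : ℂ) + z / (l : ℂ) ^ 2 = z ^ 2 / ((l : ℂ) ^ 2 * (z - l)) := by
    field_simp
    ring
  change ‖logDeriv (fun z => weierstrassFactor (z / l)) z‖ ≤ _
  rw [logDeriv_weierstrassFactor_div hl0 (sub_ne_zero.mp hzl), hsum, norm_div, norm_mul, norm_pow,
    norm_pow]
  calc ‖z‖ ^ 2 / (‖(l : ℂ)‖ ^ 2 * ‖z - l‖) ≤ ‖z‖ ^ 2 / (‖(l : ℂ)‖ ^ 2 * (‖(l : ℂ)‖ / 2)) := by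
        gcongr
    _ = 2 * ‖z‖ ^ 2 * ‖l‖⁻¹ ^ 3 := by
        change _ = 2 * ‖z‖ ^ 2 * ‖(l : ℂ)‖⁻¹ ^ 3
        field_simp

theorem summable_logDeriv_sigmaFactor (z : ℂ) :
    Summable fun l => logDeriv (L.sigmaFactor l) z := by
  refine Summable.of_norm_bounded_eventually
    (L.summable_norm_lattice_inv_cube.mul_left (2 * ‖z‖ ^ 2)) ?_
  filter_upwards [L.eventually_lt_norm_lattice (2 * ‖z‖)] with l hl
  exact L.norm_logDeriv_sigmaFactor_le hl

theorem zeta_eq_inv_add_tsum {z : ℂ} (hz : z ∉ L.periodPair.lattice) :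
    L.zeta z = 1 / z + ∑' l, logDeriv (L.sigmaFactor l) z := by
  have hfactor (l : L.periodPair.lattice) : L.sigmaFactor l z ≠ 0 := fun h =>
    hz ((sigmaFactor_eq_zero_iff.mp h).1 ▸ l.2)
  have hz0 : z ≠ 0 := fun h => hz (h ▸ zero_mem _)
  have hprod := logDeriv_tprod_eq_tsum (s := Metric.ball 0 (‖z‖ + 1)) Metric.isOpen_ball (by simp)
    hfactor (fun l => (L.differentiable_sigmaFactor l).differentiableOn)
    (L.summable_logDeriv_sigmaFactor z)
    (L.hasProdLocallyUniformlyOn_sigmaFactor (‖z‖ + 1)).multipliableLocallyUniformlyOn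
    (L.tprod_sigmaFactor_ne_zero hfactor)
  rw [← hprod, zeta, ← logDeriv_apply, funext L.sigma_eq_mul_tprod,
    logDeriv_mul (f := fun z => z) z hz0 (L.tprod_sigmaFactor_ne_zero hfactor) differentiableAt_id
    (L.differentiable_tprod_sigmaFactor z), logDeriv_id']

/-- The summands of the Mittag-Leffler expansion of `ζ`; thanks to `1 / 0 = 0` the point `l = 0`
contributes exactly `1 / z`. -/
def zetaTerm (l : L.periodPair.lattice) (z : ℂ) : ℂ := 1 / (z - l) + 1 / l + z / l ^ 2

theorem hasSum_zetaTerm {z : ℂ} (hz : z ∉ L.periodPair.lattice) :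
    HasSum (fun l => L.zetaTerm l z) (L.zeta z) := by
  classical
  rw [L.zeta_eq_inv_add_tsum hz]
  refine ((hasSum_ite_eq 0 (1 / z)).add (L.summable_logDeriv_sigmaFactor z).hasSum).congr_fun
    fun l => ?_
  by_cases hl : l = 0
  · have hconst : L.sigmaFactor 0 = fun _ => 1 := by
      ext z
      simp [sigmaFactor, weierstrassFactor_zero]
    simp [hl, zetaTerm, hconst]
  · have hzl : z ≠ l := fun h => hz (h ▸ l.2)
    have hlog := logDeriv_weierstrassFactor_div (by simpa using hl) hzl
    rw [if_neg hl, zero_add, zetaTerm, ← hlog]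
    rfl

/-- The increment `ζ(z + w) - ζ(z)` is a lattice sum of functions affine in `z`, so it is affine in
`z`; being also symmetric under `z ↦ -z - w` it is constant. -/
theorem exists_zeta_add_eq (w : L.periodPair.lattice) :
    ∃ η : ℂ, ∀ z ∉ L.periodPair.lattice, L.zeta (z + w) = L.zeta z + η := by
  have hsum {z : ℂ} (hz : z ∉ L.periodPair.lattice) :
      HasSum (fun l : L.periodPair.lattice => 1 / ((l : ℂ) + w) - 1 / l + (z + w) / (l + w) ^ 2
        - z / l ^ 2) (L.zeta (z + w) - L.zeta z) := by
    have hzw : z + w ∉ L.periodPair.lattice := by rwa [add_mem_cancel_right w.2]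
    refine (((Equiv.addRight w).hasSum_iff.mpr (L.hasSum_zetaTerm hzw)).sub
      (L.hasSum_zetaTerm hz)).congr_fun fun l => ?_
    simp only [Function.comp_apply, Equiv.coe_addRight, zetaTerm, AddMemClass.coe_add,
      add_sub_add_right_eq_sub]
    ring
  obtain ⟨a, ha⟩ := ((L.countable_lattice.union
    (Set.countable_singleton (-(w : ℂ) / 2))).dense_compl ℂ).nonempty
  simp only [Set.mem_compl_iff, Set.mem_union, SetLike.mem_coe, Set.mem_singleton_iff,
    not_or] at ha
  have hreflect : -a - w ∉ L.periodPair.lattice := by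
    rw [← neg_add', neg_mem_iff, add_mem_cancel_right w.2]
    exact ha.1
  have hne : -a - w - a ≠ 0 := fun h => ha.2 (by linear_combination -h / 2)
  have hsymm : L.zeta (-a - w + w) - L.zeta (-a - w) = L.zeta (a + w) - L.zeta a := by
    rw [sub_add_cancel, ← neg_add', zeta_neg, zeta_neg]
    ring
  refine ⟨L.zeta (a + w) - L.zeta a, fun z hz => ?_⟩
  have haffine := (hsum ha.1).add
    (((hsum hreflect).sub (hsum ha.1)).mul_left ((z - a) / (-a - w - a)))
  rw [hsymm, sub_self, mul_zero, add_zero] at haffine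
  refine sub_eq_iff_eq_add'.mp ((hsum hz).unique (haffine.congr_fun fun l => ?_))
  field_simp
  ring

theorem exists_sigma_add_eq (w : L.periodPair.lattice) :
    ∃ A B : ℂ, A ≠ 0 ∧ ∀ z, L.sigma (z + w) = A * Complex.exp (B * z) * L.sigma z := by
  obtain ⟨B, hB⟩ := L.exists_zeta_add_eq w
  have hshift : Differentiable ℂ fun z => L.sigma (z + w) := by
    have := L.differentiable_sigma
    fun_prop
  have hexp : Differentiable ℂ fun z => Complex.exp (B * z) * L.sigma z := by
    have := L.differentiable_sigma
    fun_prop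
  have hne {z : ℂ} (hz : z ∈ (L.periodPair.lattice : Set ℂ)ᶜ) : L.sigma z ≠ 0 := fun h =>
    hz (L.sigma_eq_zero_iff.mp h)
  have hne_shift {z : ℂ} (hz : z ∈ (L.periodPair.lattice : Set ℂ)ᶜ) : L.sigma (z + w) ≠ 0 := by
    rw [Ne, sigma_eq_zero_iff, add_mem_cancel_right w.2]
    exact hz
  have hlogDeriv : Set.EqOn (logDeriv fun z => L.sigma (z + w))
      (logDeriv fun z => Complex.exp (B * z) * L.sigma z) (L.periodPair.lattice : Set ℂ)ᶜ := by
    intro z hz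
    have hexp_deriv : HasDerivAt (fun z => Complex.exp (B * z)) (Complex.exp (B * z) * B) z := by
      simpa using ((hasDerivAt_id z).const_mul B).cexp
    rw [logDeriv_mul (f := fun z => Complex.exp (B * z)) z (Complex.exp_ne_zero _) (hne hz)
      hexp_deriv.differentiableAt (L.differentiable_sigma z), logDeriv_apply, logDeriv_apply,
      hexp_deriv.deriv, mul_div_cancel_left₀ _ (Complex.exp_ne_zero _), deriv_comp_add_const]
    exact (hB z hz).trans (add_comm _ _)
  obtain ⟨A, hA, hσ⟩ := (logDeriv_eqOn_iff hshift.differentiableOn hexp.differentiableOn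
    L.periodPair.isClosed_lattice.isOpen_compl
    (L.countable_lattice.isConnected_compl_of_one_lt_rank (by simp)).isPreconnected
    (fun z hz => mul_ne_zero (Complex.exp_ne_zero _) (hne hz)) fun z => hne_shift).mp hlogDeriv
  refine ⟨A, B, hA, fun z => ?_⟩
  by_cases hz : z ∈ L.periodPair.lattice
  · rw [L.sigma_eq_zero_iff.mpr hz, L.sigma_eq_zero_iff.mpr (add_mem hz w.2), mul_zero]
  · simpa [mul_assoc] using hσ hz

end EllLattice

/-! ### The three-term identity and Fay's identity -/

theorem dense_setOf_ne_zero_of_deriv_ne_zero {D : ℂ → ℂ} (hD : Differentiable ℂ D)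
    (hsimple : ∀ z, D z = 0 → deriv D z ≠ 0) : Dense {z | D z ≠ 0} := by
  intro z
  by_cases hz : D z = 0
  · have hne := (hD z).hasDerivAt.eventually_ne (c := 0) (hsimple z hz)
    exact mem_closure_of_frequently_of_tendsto hne.frequently
      (tendsto_id.mono_left nhdsWithin_le_nhds)
  · exact subset_closure hz

theorem differentiable_div_of_simple_zeros {f D : ℂ → ℂ} (hf : Differentiable ℂ f)
    (hD : Differentiable ℂ D) (hzero : ∀ z, D z = 0 → f z = 0 ∧ deriv D z ≠ 0) :
    ∃ g : ℂ → ℂ, Differentiable ℂ g ∧ ∀ z, f z = g z * D z := by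
  classical
  refine ⟨fun z => if D z = 0 then deriv f z / deriv D z else f z / D z, fun z₀ => ?_, fun z => ?_⟩
  · by_cases h₀ : D z₀ = 0
    · obtain ⟨hf₀, hD₀⟩ := hzero z₀ h₀
      have hslope {F : ℂ → ℂ} (hF : Differentiable ℂ F) : DifferentiableAt ℂ (dslope F z₀) z₀ :=
        ((Complex.differentiableOn_dslope univ_mem).mpr hF.differentiableOn).differentiableAt
          univ_mem
      have hne : dslope D z₀ z₀ ≠ 0 := by rwa [dslope_same]
      refine ((hslope hf).div (hslope hD) hne).congr_of_eventuallyEq ?_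
      filter_upwards [(hslope hD).continuousAt.eventually_ne hne] with z hz
      obtain rfl | hzz := eq_or_ne z z₀
      · simp [h₀]
      · have hf_eq : (z - z₀) * dslope f z₀ z = f z := by simpa [hf₀] using sub_smul_dslope f z₀ z
        have hD_eq : (z - z₀) * dslope D z₀ z = D z := by simpa [h₀] using sub_smul_dslope D z₀ z
        have hDz : D z ≠ 0 := hD_eq ▸ mul_ne_zero (sub_ne_zero.mpr hzz) hz
        rw [if_neg hDz, ← hf_eq, ← hD_eq, mul_div_mul_left _ _ (sub_ne_zero.mpr hzz), Pi.div_apply]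
    · refine ((hf z₀).div (hD z₀) h₀).congr_of_eventuallyEq ?_
      filter_upwards [hD.continuous.continuousAt.eventually_ne h₀] with z hz
      simp [hz]
  · by_cases hz : D z = 0
    · simp [hz, (hzero z hz).1]
    · simp [hz]

theorem exists_eq_const_mul_of_automorphic {Λ : Submodule ℤ ℂ} [DiscreteTopology Λ]
    [IsZLattice ℝ Λ] {f D : ℂ → ℂ} (hf : Differentiable ℂ f) (hD : Differentiable ℂ D)
    (hzero : ∀ z, D z = 0 → f z = 0 ∧ deriv D z ≠ 0)
    (hper : ∀ w ∈ Λ, ∃ μ : ℂ → ℂ,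
      ∀ z, μ z ≠ 0 ∧ f (z + w) = μ z * f z ∧ D (z + w) = μ z * D z) :
    ∃ c, ∀ z, f z = c * D z := by
  obtain ⟨g, hg, hfg⟩ := differentiable_div_of_simple_zeros hf hD hzero
  have hg_per (z w : ℂ) (hw : w ∈ Λ) : g (z + w) = g z := by
    obtain ⟨μ, hμ⟩ := hper w hw
    have hcont : Continuous fun z => g (z + w) := hg.continuous.comp (continuous_add_const w)
    refine congr_fun (hcont.ext_on
      (dense_setOf_ne_zero_of_deriv_ne_zero hD fun z hz => (hzero z hz).2) hg.continuous ?_) z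
    intro z hz
    obtain ⟨hμz, hfz, hDz⟩ := hμ z
    rw [hfg, hfg, hDz] at hfz
    exact mul_right_cancel₀ (mul_ne_zero hμz hz) (by linear_combination hfz)
  have hbounded := (IsZLattice.isCompact_range_of_periodic Λ g hg.continuous hg_per).isBounded
  exact ⟨g 0, fun z => by rw [hfg, hg.apply_eq_apply_of_bounded hbounded z 0]⟩

namespace EllLattice

variable (L : EllLattice)

theorem deriv_sigma_ne_zero {z : ℂ} (hz : L.sigma z = 0) : deriv L.sigma z ≠ 0 := by
  obtain ⟨A, B, hA, hσ⟩ := L.exists_sigma_add_eq ⟨z, L.sigma_eq_zero_iff.mp hz⟩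
  have hfactor : HasDerivAt (fun x => A * Complex.exp (B * x)) (A * B) 0 := by
    simpa using (((hasDerivAt_id (0 : ℂ)).const_mul B).cexp).const_mul A
  have hshift : HasDerivAt (fun x => L.sigma (x + z)) A 0 := by
    rw [funext hσ]
    simpa using! hfactor.mul L.hasDerivAt_sigma_zero
  rw [← zero_add z, ← deriv_comp_add_const, hshift.deriv]
  exact hA

/-- The kernel `σ(u + v) σ(u - v)`, in terms of which Weierstrass' three-term identity is a
Plücker relation. -/
def sigmaKernel (u v : ℂ) : ℂ := L.sigma (u + v) * L.sigma (u - v)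

theorem differentiable_sigmaKernel_left (v : ℂ) : Differentiable ℂ fun u => L.sigmaKernel u v := by
  have := L.differentiable_sigma
  unfold sigmaKernel
  fun_prop

theorem differentiable_sigmaKernel_right (u : ℂ) : Differentiable ℂ fun v => L.sigmaKernel u v := by
  have := L.differentiable_sigma
  unfold sigmaKernel
  fun_prop

@[simp]
theorem sigmaKernel_self (u : ℂ) : L.sigmaKernel u u = 0 := by
  simp [sigmaKernel]

theorem sigmaKernel_swap (u v : ℂ) : L.sigmaKernel v u = -L.sigmaKernel u v := by
  rw [sigmaKernel, sigmaKernel, ← neg_sub u v, sigma_neg, add_comm v u]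
  ring

theorem sigmaKernel_neg_left (u v : ℂ) : L.sigmaKernel (-u) v = L.sigmaKernel u v := by
  rw [sigmaKernel, sigmaKernel, show -u + v = -(u - v) by ring, show -u - v = -(u + v) by ring,
    sigma_neg, sigma_neg]
  ring

theorem sigmaKernel_ne_zero {u v : ℂ} (hadd : u + v ∉ L.periodPair.lattice)
    (hsub : u - v ∉ L.periodPair.lattice) : L.sigmaKernel u v ≠ 0 :=
  mul_ne_zero (mt L.sigma_eq_zero_iff.mp hadd) (mt L.sigma_eq_zero_iff.mp hsub)

theorem exists_sigmaKernel_add_eq (w : L.periodPair.lattice) : ∃ μ : ℂ → ℂ, ∀ u, μ u ≠ 0 ∧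
    ∀ v, L.sigmaKernel (u + w) v = μ u * L.sigmaKernel u v := by
  obtain ⟨A, B, hA, hσ⟩ := L.exists_sigma_add_eq w
  refine ⟨fun u => A ^ 2 * Complex.exp (2 * (B * u)), fun u =>
    ⟨mul_ne_zero (pow_ne_zero 2 hA) (Complex.exp_ne_zero _), fun v => ?_⟩⟩
  have hexp : Complex.exp (2 * (B * u)) =
      Complex.exp (B * (u + v)) * Complex.exp (B * (u - v)) := by
    rw [← Complex.exp_add]
    ring_nf
  simp only [sigmaKernel, add_right_comm, add_sub_right_comm, hσ, hexp]
  ring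

theorem deriv_sigmaKernel_ne_zero {v z : ℂ} (hv : 2 * v ∉ L.periodPair.lattice)
    (hz : L.sigmaKernel z v = 0) : deriv (fun u => L.sigmaKernel u v) z ≠ 0 := by
  have hderiv : deriv (fun u => L.sigmaKernel u v) z =
      deriv L.sigma (z + v) * L.sigma (z - v) + L.sigma (z + v) * deriv L.sigma (z - v) :=
    (((L.differentiable_sigma _).hasDerivAt.comp_add_const z v).mul
      ((L.differentiable_sigma _).hasDerivAt.comp_sub_const z v)).deriv
  have hsub : z + v ∈ L.periodPair.lattice → z - v ∉ L.periodPair.lattice := fun hp hm =>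
    hv (by simpa [two_mul] using sub_mem hp hm)
  rw [hderiv]
  rcases mul_eq_zero.mp hz with hp | hm
  · rw [hp, zero_mul, add_zero]
    exact mul_ne_zero (L.deriv_sigma_ne_zero hp)
      (mt L.sigma_eq_zero_iff.mp (hsub (L.sigma_eq_zero_iff.mp hp)))
  · rw [hm, mul_zero, zero_add]
    exact mul_ne_zero (mt L.sigma_eq_zero_iff.mp fun hp => hsub hp (L.sigma_eq_zero_iff.mp hm))
      (L.deriv_sigma_ne_zero hm)

/-- As functions of `a`, the last two terms of the three-term identity together and the kernel
`σ(a + b) σ(a - b)` have the same automorphy factor and vanish at the zeros `±b` of the kernel. -/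
theorem exists_sigmaKernel_combination_eq {b : ℂ} (hb : 2 * b ∉ L.periodPair.lattice) (c d : ℂ) :
    ∃ k, ∀ a, L.sigmaKernel b c * L.sigmaKernel a d - L.sigmaKernel a c * L.sigmaKernel b d =
      k * L.sigmaKernel a b := by
  set f : ℂ → ℂ := fun a =>
    L.sigmaKernel b c * L.sigmaKernel a d - L.sigmaKernel a c * L.sigmaKernel b d with hf
  have hper (w : L.periodPair.lattice) : ∃ μ : ℂ → ℂ, ∀ a, μ a ≠ 0 ∧ f (a + w) = μ a * f a ∧
      L.sigmaKernel (a + w) b = μ a * L.sigmaKernel a b := by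
    obtain ⟨μ, hμ⟩ := L.exists_sigmaKernel_add_eq w
    refine ⟨μ, fun a => ⟨(hμ a).1, ?_, (hμ a).2 b⟩⟩
    rw [hf]
    simp only [(hμ a).2]
    ring
  have hvanish {x y : ℂ} (hxy : x - y ∈ L.periodPair.lattice) (hy : f y = 0) : f x = 0 := by
    obtain ⟨μ, hμ⟩ := hper ⟨x - y, hxy⟩
    simpa [hy] using (hμ y).2.1
  have hfb : f b = 0 := by
    rw [hf]
    ring
  have hfnegb : f (-b) = 0 := by
    simp only [hf, sigmaKernel_neg_left]
    ring
  refine exists_eq_const_mul_of_automorphic (Λ := L.periodPair.lattice)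
    (((L.differentiable_sigmaKernel_left d).const_mul _).sub
      ((L.differentiable_sigmaKernel_left c).mul_const _))
    (L.differentiable_sigmaKernel_left b) (fun a ha => ⟨?_, L.deriv_sigmaKernel_ne_zero hb ha⟩)
    fun w hw => hper ⟨w, hw⟩
  rcases mul_eq_zero.mp ha with hp | hm
  · exact hvanish (by simpa using L.sigma_eq_zero_iff.mp hp) hfnegb
  · exact hvanish (L.sigma_eq_zero_iff.mp hm) hfb

theorem dense_setOf_generic (c : ℂ) : Dense {b | 2 * b ∉ L.periodPair.lattice ∧
    c + b ∉ L.periodPair.lattice ∧ c - b ∉ L.periodPair.lattice} := by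
  have hpreimage {f : ℂ → ℂ} (hf : f.Injective) : (f ⁻¹' L.periodPair.lattice).Countable :=
    L.countable_lattice.preimage_of_injOn hf.injOn
  have hcountable := ((hpreimage (mul_right_injective₀ (two_ne_zero (α := ℂ)))).union
    ((hpreimage (add_right_injective c)).union (hpreimage (sub_right_injective (b := c)))))
  refine (hcountable.dense_compl ℂ).mono fun b hb => ?_
  simpa [not_or] using hb

theorem sigmaKernel_three_term (a b c d : ℂ) :
    L.sigmaKernel a b * L.sigmaKernel c d + L.sigmaKernel b c * L.sigmaKernel a d
      + L.sigmaKernel c a * L.sigmaKernel b d = 0 := by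
  have hcont_left (v : ℂ) := (L.differentiable_sigmaKernel_left v).continuous
  have hcont_right := (L.differentiable_sigmaKernel_right a).continuous
  refine congr_fun (Continuous.ext_on (L.dense_setOf_generic c)
    (f := fun b => L.sigmaKernel a b * L.sigmaKernel c d + L.sigmaKernel b c * L.sigmaKernel a d
      + L.sigmaKernel c a * L.sigmaKernel b d) (by fun_prop) continuous_const ?_) b
  rintro b ⟨hb, hadd, hsub⟩
  obtain ⟨k, hk⟩ := L.exists_sigmaKernel_combination_eq hb c d
  have hkc : k = -L.sigmaKernel c d := by
    refine mul_right_cancel₀ (L.sigmaKernel_ne_zero hadd hsub) ?_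
    rw [← hk c, sigmaKernel_self, L.sigmaKernel_swap c b]
    ring
  have hka := hk a
  rw [hkc] at hka
  linear_combination hka + L.sigmaKernel b d * L.sigmaKernel_swap a c

theorem sigma_fay (a b c t : ℂ) :
    L.sigma (b + c + t) * L.sigma t * (L.sigma (a + b) * L.sigma (a + c)) =
      L.sigma (b + t) * L.sigma (c + t) * (L.sigma a * L.sigma (a + b + c)) -
        L.sigma (a + b + c + t) * L.sigma (a - t) * (L.sigma b * L.sigma c) := by
  have h := L.sigmaKernel_three_term (t + (b + c) / 2) ((b + c) / 2) (a + (b + c) / 2) ((b - c) / 2)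
  simp only [sigmaKernel] at h
  ring_nf at h ⊢
  rw [sigma_neg] at h
  linear_combination h

theorem chi_eq {a b c : ℂ} (ha : L.sigma a ≠ 0) (hb : L.sigma b ≠ 0) (hc : L.sigma c ≠ 0)
    (habc : L.sigma (a + b + c) ≠ 0) :
    L.chi a b c = L.sigma (a + b) * L.sigma (b + c) * L.sigma (a + c) /
      (L.sigma a * L.sigma b * L.sigma c * L.sigma (a + b + c)) := by
  have hadd (k : ℂ) : HasDerivAt (fun t => L.sigma (k + t)) (deriv L.sigma k) 0 := by
    simpa using (L.differentiable_sigma (k + 0)).hasDerivAt.comp_const_add k 0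
  have hsub : HasDerivAt (fun t => L.sigma (a - t)) (-deriv L.sigma a) 0 := by
    simpa using (L.differentiable_sigma (a - 0)).hasDerivAt.comp_const_sub a 0
  have hleft := ((hadd (b + c)).mul L.hasDerivAt_sigma_zero).mul_const
    (L.sigma (a + b) * L.sigma (a + c))
  have hright := (((hadd b).mul (hadd c)).mul_const (L.sigma a * L.sigma (a + b + c))).sub
    (((hadd (a + b + c)).mul hsub).mul_const (L.sigma b * L.sigma c))
  have hderiv := hleft.unique (hright.congr_of_eventuallyEq (.of_forall (L.sigma_fay a b c)))
  simp only [sigma_zero, mul_zero, add_zero, mul_one, zero_add, sub_zero] at hderiv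
  rw [chi, zeta, zeta, zeta, zeta, show c + a + b = a + b + c by ring]
  field_simp
  linear_combination -hderiv

theorem chi_neg_left {a b ξ : ℂ} (ha : L.sigma a ≠ 0) (hb : L.sigma b ≠ 0)
    (hξa : L.sigma (ξ + a) ≠ 0) (hξb : L.sigma (ξ + b) ≠ 0) :
    L.chi (-a) b (ξ + a) = L.sigma (a - b) * L.sigma (ξ + a + b) * L.sigma ξ /
      (L.sigma a * L.sigma b * L.sigma (ξ + a) * L.sigma (ξ + b)) := by
  rw [L.chi_eq (by rwa [sigma_neg, neg_ne_zero]) hb hξa (by convert hξb using 2; ring),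
    show -a + b + (ξ + a) = ξ + b by ring, show -a + b = -(a - b) by ring,
    show b + (ξ + a) = ξ + a + b by ring, show -a + (ξ + a) = ξ by ring, sigma_neg, sigma_neg]
  simp only [neg_mul, neg_div_neg_eq]

theorem chi_neg_left_add (a b c ξ : ℂ) :
    L.chi (-c) b (ξ + c) + L.chi (-a) c (ξ + a) = L.chi (-a) b (ξ + a) := by
  simp only [chi, zeta_neg]
  ring_nf

/-- The factor multiplying the `(x, y)` entry of a dressed Cauchy matrix under the shift
`ξ ↦ ξ + p - q` (a Miwa shift in the KP times). -/
def shiftFactor (p q x y : ℂ) : ℂ :=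
  L.sigma (p - x) / L.sigma (q - x) * (L.sigma (q + y) / L.sigma (p + y))

/-- Removing the row `p` and the column `-q` from a Cauchy matrix by a Schur complement leaves a
Cauchy matrix with shifted `ξ`. -/
theorem Phi_shift {ξ p q x y : ℂ} (hξ : L.sigma ξ ≠ 0) (hξpq : L.sigma (ξ + p - q) ≠ 0)
    (hxy : L.sigma (x + y) ≠ 0) (hqx : L.sigma (q - x) ≠ 0)
    (hpy : L.sigma (p + y) ≠ 0) :
    L.Phi (ξ + p - q) (x + y) * L.shiftFactor p q x y =
      L.Phi ξ (x + y) - L.Phi ξ (x - q) * L.Phi ξ (p + y) / L.Phi ξ (p - q) := by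
  have hfay := L.sigma_fay (ξ + p - q) (q + y) (x - p) (p - q)
  rw [show q + y + (x - p) + (p - q) = x + y by ring,
    show ξ + p - q + (q + y) = ξ + (p + y) by ring,
    show ξ + p - q + (x - p) = ξ + (x - q) by ring,
    show q + y + (p - q) = p + y by ring, show x - p + (p - q) = -(q - x) by ring,
    show ξ + (p + y) + (x - p) = ξ + (x + y) by ring,
    show ξ + (x + y) + (p - q) = ξ + p - q + (x + y) by ring,
    show ξ + p - q - (p - q) = ξ by ring, ← neg_sub p x, sigma_neg, sigma_neg] at hfay
  have hxq : L.sigma (x - q) = -L.sigma (q - x) := by rw [← neg_sub q x, sigma_neg]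
  rw [Phi, Phi, Phi, Phi, Phi, shiftFactor, hxq, ← add_sub_assoc ξ p q]
  field_simp
  linear_combination -hfay

theorem sigma_sub_ne_zero {a b : ℂ} (h : L.sigma (a - b) ≠ 0) : L.sigma (b - a) ≠ 0 := by
  rw [← neg_sub, sigma_neg]
  exact neg_ne_zero.mpr h

theorem shiftFactor_mul_shiftFactor {p q r x y : ℂ} (hqx : L.sigma (q - x) ≠ 0)
    (hqy : L.sigma (q + y) ≠ 0) :
    L.shiftFactor q r x y * L.shiftFactor p q x y = L.shiftFactor p r x y := by
  simp only [shiftFactor]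
  field_simp

theorem Phi_zpow_add_one_mul {d x y : ℂ} (hd : L.sigma d ≠ 0) (hx : L.sigma (-x) ≠ 0)
    (hy : L.sigma y ≠ 0) (hdx : L.sigma (d - x) ≠ 0) (hdy : L.sigma (d + y) ≠ 0) (n : ℤ) :
    L.Phi d (-x) ^ (n + 1) * L.Phi d y ^ (-(n + 1)) =
      L.Phi d (-x) ^ n * L.Phi d y ^ (-n) * L.shiftFactor d 0 x y := by
  have hfactor : L.Phi d (-x) / L.Phi d y = L.shiftFactor d 0 x y := by
    rw [Phi, Phi, shiftFactor, zero_sub, zero_add, ← sub_eq_add_neg]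
    field_simp
  have hPhi_x : L.Phi d (-x) ≠ 0 :=
    div_ne_zero (by rwa [← sub_eq_add_neg]) (mul_ne_zero hd hx)
  have hPhi_y : L.Phi d y ≠ 0 := div_ne_zero hdy (mul_ne_zero hd hy)
  rw [← hfactor, neg_add, zpow_add_one₀ hPhi_x, ← sub_eq_add_neg, zpow_sub_one₀ hPhi_y]
  ring

end EllLattice

/-! ### Determinants and Schur complements -/

section Determinants

variable {𝕜 n ι : Type*} [Fintype n] [DecidableEq n] [Fintype ι] [DecidableEq ι]

theorem dense_setOf_isUnit_det [NontriviallyNormedField 𝕜] :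
    Dense {A : Matrix n n 𝕜 | IsUnit A.det} := by
  intro A
  have hmem : (0 : 𝕜) ∈ closure (spectrum 𝕜 A)ᶜ := by
    rw [Set.compl_eq_univ_sdiff]
    exact dense_univ.sdiff_finite A.finite_spectrum 0
  have hcont : Continuous fun t : 𝕜 => A - t • (1 : Matrix n n 𝕜) := by fun_prop
  have hmaps (t : 𝕜) (ht : t ∈ (spectrum 𝕜 A)ᶜ) : IsUnit (A - t • (1 : Matrix n n 𝕜)).det := by
    rw [Set.mem_compl_iff, spectrum.notMem_iff, Algebra.algebraMap_eq_smul_one] at ht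
    rw [← Matrix.isUnit_iff_isUnit_det, ← neg_sub]
    exact ht.neg
  have hclosure := map_mem_closure (t := {A : Matrix n n 𝕜 | IsUnit A.det}) hcont hmem hmaps
  rwa [zero_smul, sub_zero] at hclosure

/-- Both sides are the determinant of the block matrix with rows `(K, S)` and `(R, A)`. -/
theorem det_mul_det_sub_mul_inv_mul [CommRing 𝕜] {A : Matrix n n 𝕜} (hA : IsUnit A.det)
    {K : Matrix ι ι 𝕜} (hK : IsUnit K.det) (R : Matrix n ι 𝕜) (S : Matrix ι n 𝕜) :
    K.det * (A - R * K⁻¹ * S).det = A.det * (K - S * A⁻¹ * R).det := by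
  let := A.invertibleOfIsUnitDet hA
  let := K.invertibleOfIsUnitDet hK
  rw [← invOf_eq_nonsing_inv, ← invOf_eq_nonsing_inv, ← det_fromBlocks₁₁, ← det_fromBlocks₂₂]

theorem mul_det_sub_inv_smul_vecMulVec [Field 𝕜] {A : Matrix n n 𝕜} (hA : IsUnit A.det) {k : 𝕜}
    (hk : k ≠ 0) (a b : n → 𝕜) :
    k * (A - k⁻¹ • vecMulVec a b).det = A.det * (k - b ⬝ᵥ (A⁻¹ *ᵥ a)) := by
  have hbordered := det_mul_det_sub_mul_inv_mul hA (K := k • (1 : Matrix Unit Unit 𝕜))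
    (by simpa using hk) (replicateCol Unit a) (replicateRow Unit b)
  have hinv : replicateCol Unit a * (k • (1 : Matrix Unit Unit 𝕜))⁻¹ * replicateRow Unit b =
      k⁻¹ • vecMulVec a b := by
    ext i j
    simp [mul_apply, vecMulVec_apply]
    ring
  have hschur : (k • (1 : Matrix Unit Unit 𝕜) - replicateRow Unit b * A⁻¹ *
      replicateCol Unit a).det = k - b ⬝ᵥ (A⁻¹ *ᵥ a) := by
    rw [det_unique, Matrix.mul_assoc, ← replicateCol_mulVec]
    simp [mul_apply, dotProduct]
  rwa [hinv, hschur, det_unique, Matrix.smul_apply, one_apply_eq, smul_eq_mul, mul_one] at hbordered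

theorem det_pow_card_mul_det_sub [Field 𝕜] {A : Matrix n n 𝕜} (hA : IsUnit A.det)
    {K : Matrix ι ι 𝕜} (hK : K.det ≠ 0) (hentry : ∀ p q, K p q ≠ 0) (R : Matrix n ι 𝕜)
    (S : Matrix ι n 𝕜) :
    A.det ^ Fintype.card ι * (K.det * (A - R * K⁻¹ * S).det) = A.det *
      (of fun p q => K p q * (A - (K p q)⁻¹ • vecMulVec (Rᵀ q) (S p)).det).det := by
  have hminors : (of fun p q => K p q * (A - (K p q)⁻¹ • vecMulVec (Rᵀ q) (S p)).det) =
      A.det • (K - S * A⁻¹ * R) := by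
    ext p q
    rw [of_apply, mul_det_sub_inv_smul_vecMulVec hA (hentry p q), Matrix.smul_apply,
      Matrix.sub_apply, Matrix.mul_assoc, mul_apply']
    rfl
  rw [hminors, det_smul, det_mul_det_sub_mul_inv_mul hA hK.isUnit]
  ring

theorem det_mul_det_mul_det_sub [NontriviallyNormedField 𝕜] {K : Matrix (Fin 2) (Fin 2) 𝕜}
    (hK : K.det ≠ 0) (hentry : ∀ p q, K p q ≠ 0) (A : Matrix n n 𝕜) (R : Matrix n (Fin 2) 𝕜)
    (S : Matrix (Fin 2) n 𝕜) :
    K.det * (A.det * (A - R * K⁻¹ * S).det) =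
      (of fun p q => K p q * (A - (K p q)⁻¹ • vecMulVec (Rᵀ q) (S p)).det).det := by
  refine congr_fun (Continuous.ext_on dense_setOf_isUnit_det
    (f := fun A => K.det * (A.det * (A - R * K⁻¹ * S).det))
    (g := fun A => (of fun p q => K p q * (A - (K p q)⁻¹ • vecMulVec (Rᵀ q) (S p)).det).det)
    (by fun_prop) (by fun_prop) fun A hA => ?_) A
  have hsylvester := det_pow_card_mul_det_sub hA hK hentry R S
  rw [Fintype.card_fin, sq, mul_assoc] at hsylvester
  exact (mul_left_comm _ _ _).trans (mul_left_cancel₀ hA.ne_zero hsylvester)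

/-- The quotient formula for Schur complements of the bordered matrix with rows `(K, t)` and
`(r, c)`: the two columns of `K` may be eliminated one after the other. -/
theorem sub_dotProduct_inv_mulVec [Field 𝕜] {K : Matrix (Fin 2) (Fin 2) 𝕜} (hK : K.det ≠ 0)
    (hcorner : K 0 0 ≠ 0) (r t : Fin 2 → 𝕜) (c : 𝕜) :
    c - r ⬝ᵥ (K⁻¹ *ᵥ t) = c - r 0 * t 0 / K 0 0 -
      (r 1 - r 0 * K 0 1 / K 0 0) * (t 1 - K 1 0 * t 0 / K 0 0) /
        (K 1 1 - K 1 0 * K 0 1 / K 0 0) := by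
  have hschur : K 1 1 - K 1 0 * K 0 1 / K 0 0 = K.det / K 0 0 := by
    rw [det_fin_two]
    field_simp
  rw [hschur, inv_def, adjugate_fin_two, Ring.inverse_eq_inv']
  simp only [mulVec, dotProduct, Fin.sum_univ_two, Matrix.smul_apply, of_apply, cons_val',
    cons_val_zero, cons_val_one, cons_val_fin_one, smul_eq_mul]
  field_simp
  rw [det_fin_two]
  ring

end Determinants

/-! ### Tau functions of elliptic Cauchy matrices -/

namespace EllLattice

variable (L : EllLattice)

/-- Genericity of two consecutive shifts `ξ ↦ ξ + p 0 - q 0 ↦ ξ + p 0 - q 0 + p 1 - q 1`: the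
sigma function does not vanish at the arguments that do not involve rapidities. -/
structure IsGenericShift (ξ : ℂ) (p q : Fin 2 → ℂ) : Prop where
  base : L.sigma ξ ≠ 0
  single (a b : Fin 2) : L.sigma (ξ + p a - q b) ≠ 0
  double : L.sigma (ξ + p 0 - q 0 + p 1 - q 1) ≠ 0
  sub (a b : Fin 2) : L.sigma (p a - q b) ≠ 0
  source : L.sigma (p 0 - p 1) ≠ 0
  target : L.sigma (q 0 - q 1) ≠ 0

/-- The `2 × 2` elliptic Cauchy matrix `Φ_ξ(p_a - q_b)` of a pair of shifts. -/
def shiftMatrix (ξ : ℂ) (p q : Fin 2 → ℂ) : Matrix (Fin 2) (Fin 2) ℂ :=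
  of fun a b => L.Phi ξ (p a - q b)

namespace IsGenericShift

variable {L} {ξ : ℂ} {p q : Fin 2 → ℂ}

theorem shiftMatrix_ne_zero (h : L.IsGenericShift ξ p q) (a b : Fin 2) :
    L.shiftMatrix ξ p q a b ≠ 0 := by
  rw [shiftMatrix, of_apply, Phi, ← add_sub_assoc]
  exact div_ne_zero (h.single a b) (mul_ne_zero h.base (h.sub a b))

theorem shiftFactor_ne_zero (h : L.IsGenericShift ξ p q) :
    L.shiftFactor (p 0) (q 0) (p 1) (-q 1) ≠ 0 := by
  rw [shiftFactor, ← sub_eq_add_neg, ← sub_eq_add_neg]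
  exact mul_ne_zero (div_ne_zero h.source (L.sigma_sub_ne_zero (h.sub 1 0)))
    (div_ne_zero h.target (h.sub 0 1))

theorem det_shiftMatrix (h : L.IsGenericShift ξ p q) : (L.shiftMatrix ξ p q).det =
    L.Phi ξ (p 0 - q 0) * (L.Phi (ξ + p 0 - q 0) (p 1 - q 1) *
      L.shiftFactor (p 0) (q 0) (p 1) (-q 1)) := by
  have hshift := L.Phi_shift h.base (h.single 0 0) (x := p 1) (y := -q 1)
    (by simpa only [← sub_eq_add_neg] using h.sub 1 1)
    (L.sigma_sub_ne_zero (h.sub 1 0)) (by simpa only [← sub_eq_add_neg] using h.sub 0 1)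
  have hne : L.Phi ξ (p 0 - q 0) ≠ 0 := h.shiftMatrix_ne_zero 0 0
  simp only [← sub_eq_add_neg] at hshift
  rw [hshift, det_fin_two]
  simp only [shiftMatrix, of_apply]
  field_simp

theorem det_shiftMatrix_ne_zero (h : L.IsGenericShift ξ p q) : (L.shiftMatrix ξ p q).det ≠ 0 := by
  rw [h.det_shiftMatrix]
  refine mul_ne_zero (h.shiftMatrix_ne_zero 0 0) (mul_ne_zero (div_ne_zero ?_ ?_)
    h.shiftFactor_ne_zero)
  · rw [← add_sub_assoc]
    exact h.double
  · exact mul_ne_zero (h.single 0 0) (h.sub 1 1)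

/-- Iterating `Phi_shift` composes Schur complements. -/
theorem Phi_double_shift (h : L.IsGenericShift ξ p q) {x y : ℂ} (hx : ∀ b, L.sigma (q b - x) ≠ 0)
    (hy : ∀ a, L.sigma (p a + y) ≠ 0) (hxy : L.sigma (x + y) ≠ 0) :
    L.Phi (ξ + p 0 - q 0 + p 1 - q 1) (x + y) *
        (L.shiftFactor (p 0) (q 0) x y * L.shiftFactor (p 1) (q 1) x y) =
      L.Phi ξ (x + y) - (fun b => L.Phi ξ (x - q b)) ⬝ᵥ
        ((L.shiftMatrix ξ p q)⁻¹ *ᵥ fun a => L.Phi ξ (p a + y)) := by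
  have hfirst {u v : ℂ} (huv : L.sigma (u + v) ≠ 0) (hu : L.sigma (q 0 - u) ≠ 0)
      (hv : L.sigma (p 0 + v) ≠ 0) := L.Phi_shift h.base (h.single 0 0) huv hu hv
  have hpq := L.sigma_sub_ne_zero (h.sub 1 0)
  have hxy_first := hfirst hxy (hx 0) (hy 0)
  have hx_first := hfirst (v := -q 1)
    (by simpa only [← sub_eq_add_neg] using L.sigma_sub_ne_zero (hx 1)) (hx 0)
    (by simpa only [← sub_eq_add_neg] using h.sub 0 1)
  have hy_first := hfirst (hy 1) hpq (hy 0)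
  have hcorner_first := hfirst (v := -q 1) (by simpa only [← sub_eq_add_neg] using h.sub 1 1) hpq
    (by simpa only [← sub_eq_add_neg] using h.sub 0 1)
  have hfactor : L.shiftFactor (p 0) (q 0) x (-q 1) * L.shiftFactor (p 0) (q 0) (p 1) y =
      L.shiftFactor (p 0) (q 0) x y * L.shiftFactor (p 0) (q 0) (p 1) (-q 1) := by
    simp only [shiftFactor]
    ring
  simp only [← sub_eq_add_neg] at hx_first hcorner_first
  rw [sub_dotProduct_inv_mulVec h.det_shiftMatrix_ne_zero (h.shiftMatrix_ne_zero 0 0)]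
  simp only [shiftMatrix, of_apply]
  rw [← hxy_first, ← hx_first, ← hy_first, ← hcorner_first, mul_mul_mul_comm, hfactor,
    mul_comm (L.shiftFactor _ _ _ _), ← mul_assoc, L.Phi_shift (h.single 0 0) h.double hxy (hx 1)
      (hy 1), sub_mul]
  have hne := h.shiftFactor_ne_zero
  field_simp

theorem exists_chi_eq {ξ a b c : ℂ}
    (h : L.IsGenericShift (ξ + c) ![a, b] ![c, 0]) : ∃ F,
      L.chi (-c) b (ξ + c) = F * (L.Phi (ξ + c) (a - c) * L.Phi (ξ + c) b) ∧
      L.chi (-a) c (ξ + a) = -(F * (L.Phi (ξ + c) a * L.Phi (ξ + c) (b - c))) := by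
  have ha : L.sigma a ≠ 0 := by simpa using h.sub 0 1
  have hb : L.sigma b ≠ 0 := by simpa using h.sub 1 1
  have hc : L.sigma c ≠ 0 := by simpa using h.target
  have hac : L.sigma (a - c) ≠ 0 := h.sub 0 0
  have hcb : L.sigma (c - b) ≠ 0 := L.sigma_sub_ne_zero (h.sub 1 0)
  have hξc : L.sigma (ξ + c) ≠ 0 := h.base
  have hξa : L.sigma (ξ + a) ≠ 0 := by simpa [add_right_comm ξ c] using h.single 0 0
  have hξb : L.sigma (ξ + b) ≠ 0 := by simpa [add_right_comm ξ c] using h.single 1 0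
  refine ⟨L.sigma (c - b) * L.sigma ξ * L.sigma (ξ + c) * L.sigma (a - c) /
    (L.sigma c * L.sigma (ξ + b) * L.sigma (ξ + a)), ?_, ?_⟩
  · rw [L.chi_neg_left hc hb hξc hξb, Phi, Phi, add_add_sub_cancel]
    field_simp
  · rw [L.chi_neg_left ha hc hξa hξc, Phi, Phi, add_add_sub_cancel, ← neg_sub c b, sigma_neg,
      add_right_comm ξ c]
    field_simp

end IsGenericShift

end EllLattice

section CauchyTau

variable {m n : Type*} [Fintype m] [Fintype n] [DecidableEq m]

namespace EllLattice

variable (L : EllLattice)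

/-- The tau function `det (1 + M C)` of a dressed elliptic Cauchy matrix
`M i j = w i j * Φ_ξ(x i + y j)`, where the weight `w` collects the plane-wave factors. -/
def cauchyTau (ξ : ℂ) (x : m → ℂ) (y : n → ℂ) (C : Matrix n m ℂ) (w : m → n → ℂ) : ℂ :=
  (1 + of (fun i j => w i j * L.Phi ξ (x i + y j)) * C).det

namespace IsGenericShift

variable {L} {ξ : ℂ} {p q : Fin 2 → ℂ} {x : m → ℂ} {y : n → ℂ}

theorem cauchyTau_single (h : L.IsGenericShift ξ p q) (hx : ∀ i b, L.sigma (q b - x i) ≠ 0)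
    (hy : ∀ j a, L.sigma (p a + y j) ≠ 0) (hxy : ∀ i j, L.sigma (x i + y j) ≠ 0)
    (C : Matrix n m ℂ) (X : m → ℂ) (Y : n → ℂ) (a b : Fin 2) :
    L.cauchyTau (ξ + p a - q b) x y C
        (fun i j => X i * Y j * L.shiftFactor (p a) (q b) (x i) (y j)) =
      (1 + of (fun i j => X i * Y j * L.Phi ξ (x i + y j)) * C - (L.shiftMatrix ξ p q a b)⁻¹ •
        vecMulVec (fun i => X i * L.Phi ξ (x i - q b))
          ((fun j => L.Phi ξ (p a + y j) * Y j) ᵥ* C)).det := by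
  rw [cauchyTau, ← vecMulVec_mul, ← Matrix.smul_mul, add_sub_assoc (1 : Matrix m m ℂ),
    ← Matrix.sub_mul]
  congr 3
  ext i j
  have hshift := L.Phi_shift h.base (h.single a b) (hxy i j) (hx i b) (hy j a)
  rw [of_apply, Matrix.sub_apply, of_apply, Matrix.smul_apply, vecMulVec_apply, shiftMatrix,
    of_apply, smul_eq_mul]
  linear_combination X i * Y j * hshift

theorem cauchyTau_double (h : L.IsGenericShift ξ p q) (hx : ∀ i b, L.sigma (q b - x i) ≠ 0)
    (hy : ∀ j a, L.sigma (p a + y j) ≠ 0) (hxy : ∀ i j, L.sigma (x i + y j) ≠ 0)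
    (C : Matrix n m ℂ) (X : m → ℂ) (Y : n → ℂ) :
    L.cauchyTau (ξ + p 0 - q 0 + p 1 - q 1) x y C (fun i j => X i * Y j *
        (L.shiftFactor (p 0) (q 0) (x i) (y j) * L.shiftFactor (p 1) (q 1) (x i) (y j))) =
      (1 + of (fun i j => X i * Y j * L.Phi ξ (x i + y j)) * C -
        of (fun i b => X i * L.Phi ξ (x i - q b)) * (L.shiftMatrix ξ p q)⁻¹ *
          (of (fun a j => L.Phi ξ (p a + y j) * Y j) * C)).det := by
  rw [cauchyTau, ← Matrix.mul_assoc, add_sub_assoc (1 : Matrix m m ℂ), ← Matrix.sub_mul]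
  congr 3
  ext i j
  have hshift := h.Phi_double_shift (hx i) (hy j) (hxy i j)
  have hentry : (of (fun i b => X i * L.Phi ξ (x i - q b)) * (L.shiftMatrix ξ p q)⁻¹ *
      of (fun a j => L.Phi ξ (p a + y j) * Y j)) i j = X i * Y j *
        ((fun b => L.Phi ξ (x i - q b)) ⬝ᵥ
          ((L.shiftMatrix ξ p q)⁻¹ *ᵥ fun a => L.Phi ξ (p a + y j))) := by
    rw [Matrix.mul_assoc]
    simp only [mul_apply, of_apply, dotProduct, mulVec, Fin.sum_univ_two]
    ring
  rw [of_apply, Matrix.sub_apply, of_apply, hentry]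
  linear_combination X i * Y j * hshift

theorem cauchyTau_mul_cauchyTau (h : L.IsGenericShift ξ p q)
    (hx : ∀ i b, L.sigma (q b - x i) ≠ 0) (hy : ∀ j a, L.sigma (p a + y j) ≠ 0)
    (hxy : ∀ i j, L.sigma (x i + y j) ≠ 0) (C : Matrix n m ℂ) (X : m → ℂ) (Y : n → ℂ) :
    (L.shiftMatrix ξ p q).det * (L.cauchyTau ξ x y C (fun i j => X i * Y j) *
        L.cauchyTau (ξ + p 0 - q 0 + p 1 - q 1) x y C (fun i j => X i * Y j *
          (L.shiftFactor (p 0) (q 0) (x i) (y j) * L.shiftFactor (p 1) (q 1) (x i) (y j)))) =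
      (of fun a b => L.shiftMatrix ξ p q a b * L.cauchyTau (ξ + p a - q b) x y C
        (fun i j => X i * Y j * L.shiftFactor (p a) (q b) (x i) (y j))).det := by
  simp only [h.cauchyTau_single hx hy hxy, h.cauchyTau_double hx hy hxy]
  exact det_mul_det_mul_det_sub h.det_shiftMatrix_ne_zero h.shiftMatrix_ne_zero _ _ _

theorem cauchyTau_three_term {ξ a b c : ℂ} {x : m → ℂ} {y : n → ℂ}
    (h : L.IsGenericShift (ξ + c) ![a, b] ![c, 0]) (hx : ∀ i, L.sigma (-x i) ≠ 0)
    (hcx : ∀ i, L.sigma (c - x i) ≠ 0) (hay : ∀ j, L.sigma (a + y j) ≠ 0)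
    (hby : ∀ j, L.sigma (b + y j) ≠ 0) (hcy : ∀ j, L.sigma (c + y j) ≠ 0)
    (hxy : ∀ i j, L.sigma (x i + y j) ≠ 0) (C : Matrix n m ℂ) (X : m → ℂ) (Y : n → ℂ) :
    let s (d : ℂ) (i : m) (j : n) : ℂ := L.shiftFactor d 0 (x i) (y j)
    L.chi (-a) b (ξ + a) * L.cauchyTau (ξ + c) x y C (fun i j => X i * Y j * s c i j) *
        L.cauchyTau (ξ + a + b) x y C (fun i j => X i * Y j * s a i j * s b i j) =
      L.chi (-c) b (ξ + c) * L.cauchyTau (ξ + a) x y C (fun i j => X i * Y j * s a i j) *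
          L.cauchyTau (ξ + c + b) x y C (fun i j => X i * Y j * s c i j * s b i j) +
        L.chi (-a) c (ξ + a) * L.cauchyTau (ξ + b) x y C (fun i j => X i * Y j * s b i j) *
          L.cauchyTau (ξ + c + a) x y C (fun i j => X i * Y j * s c i j * s a i j) := by
  intro s
  have hweight (i : m) (j : n) : X i * (L.sigma (c - x i) / L.sigma (0 - x i)) *
      (Y j * (L.sigma (0 + y j) / L.sigma (c + y j))) = X i * Y j * s c i j :=
    mul_mul_mul_comm _ _ _ _
  have hs (d : ℂ) (i : m) (j : n) :
      X i * Y j * s c i j * L.shiftFactor d c (x i) (y j) = X i * Y j * s d i j := by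
    rw [mul_assoc, L.shiftFactor_mul_shiftFactor (hcx i) (hcy j)]
  have hs_zero (d : ℂ) (i : m) (j : n) : L.shiftFactor d 0 (x i) (y j) = s d i j := rfl
  have hsub (d : ℂ) : ξ + c + d - c = ξ + d := by ring
  have hjacobi := h.cauchyTau_mul_cauchyTau (x := x) (y := y)
    (fun i => Fin.forall_fin_two.mpr ⟨hcx i, by simpa using hx i⟩)
    (fun j => Fin.forall_fin_two.mpr ⟨hay j, hby j⟩) hxy C
    (fun i => X i * (L.sigma (c - x i) / L.sigma (0 - x i)))
    (fun j => Y j * (L.sigma (0 + y j) / L.sigma (c + y j)))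
  obtain ⟨F, hF, hF'⟩ := h.exists_chi_eq
  rw [det_fin_two, det_fin_two] at hjacobi
  simp only [shiftMatrix, of_apply, cons_val_zero, cons_val_one, hweight, ← mul_assoc, hs, hs_zero,
    sub_zero, hsub] at hjacobi
  rw [← L.chi_neg_left_add a b c ξ, hF, hF']
  linear_combination F * hjacobi

end IsGenericShift

end EllLattice

end CauchyTau

/-! ### The elliptic soliton solution -/

namespace KPData

variable {N N' : ℕ} (D : KPData N N')

/-- The plane-wave factor `ρ_i` with the exponentials of `Ψ = Φ exp(-ζ ·)` cancelled. -/
def rowWeight (n m h : ℤ) (i : Fin N) : ℂ :=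
  D.L.Phi D.del (-D.κ i) ^ n * D.L.Phi D.eps (-D.κ i) ^ m * D.L.Phi D.lam (-D.κ i) ^ h * D.ρ0 i

/-- The plane-wave factor `ν_j` with the exponentials of `Ψ = Φ exp(-ζ ·)` cancelled. -/
def colWeight (n m h : ℤ) (j : Fin N') : ℂ :=
  D.L.Phi D.del (D.κ' j) ^ (-n) * D.L.Phi D.eps (D.κ' j) ^ (-m) * D.L.Phi D.lam (D.κ' j) ^ (-h) *
    D.ν0 j

theorem τ_eq_cauchyTau (n m h : ℤ) : D.τ n m h = D.L.cauchyTau (D.xi n m h) D.κ D.κ' D.C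
    fun i j => D.rowWeight n m h i * D.colWeight n m h j := by
  have hPhi (ξ z : ℂ) : Complex.exp (D.L.zeta ξ * z) * D.L.Psi ξ z = D.L.Phi ξ z := by
    rw [EllLattice.Psi, mul_left_comm, ← Complex.exp_add]
    simp
  have hPhi_neg (ξ z : ℂ) : Complex.exp (-D.L.zeta ξ * z) * D.L.Psi ξ (-z) = D.L.Phi ξ (-z) := by
    rw [neg_mul_comm, hPhi]
  rw [τ, EllLattice.cauchyTau]
  congr 3
  ext i j
  rw [M, of_apply, of_apply, ← hPhi (D.xi n m h), mul_add, Complex.exp_add]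
  simp only [ρ, ν, hPhi, hPhi_neg, rowWeight, colWeight]
  ring

theorem xi_add_one_left (n m h : ℤ) : D.xi (n + 1) m h = D.xi n m h + D.del := by
  simp only [xi, add_smul, one_smul]
  ring

theorem xi_add_one_middle (n m h : ℤ) : D.xi n (m + 1) h = D.xi n m h + D.eps := by
  simp only [xi, add_smul, one_smul]
  ring

theorem xi_add_one_right (n m h : ℤ) : D.xi n m (h + 1) = D.xi n m h + D.lam := by
  simp only [xi, add_smul, one_smul]
  ring

variable {D}

theorem Generic.sigma_ne_zero {P : ℕ} {extra : Fin P → ℂ} (hgen : D.Generic extra) (n m h : ℤ)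
    (c₀ cn cm ch : ℤ) (a : Fin N → ℤ) (b : Fin N' → ℤ)
    (hne : ¬(c₀ = 0 ∧ cn = 0 ∧ cm = 0 ∧ ch = 0 ∧ a = 0 ∧ b = 0)) {z : ℂ}
    (hz : z = c₀ * D.xi n m h + cn * D.del + cm * D.eps + ch * D.lam + ∑ i, a i * D.κ i +
      ∑ j, b j * D.κ' j) : D.L.sigma z ≠ 0 := by
  have hmem := hgen c₀ (c₀ * n + cn) (c₀ * m + cm) (c₀ * h + ch) a b 0 (by
    rintro ⟨rfl, hn, hm, hh, ha, hb, -⟩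
    simp only [zero_mul, zero_add] at hn hm hh
    exact hne ⟨rfl, hn, hm, hh, ha, hb⟩)
  rw [Ne, EllLattice.sigma_eq_zero_iff, ← EllLattice.mem_iff]
  convert hmem using 2
  rw [hz]
  simp [xi]
  ring

namespace Generic

variable {P : ℕ} {extra : Fin P → ℂ}

theorem sigma_sub_κ_ne_zero (hgen : D.Generic extra) (cn cm ch : ℤ) (i : Fin N) :
    D.L.sigma (cn * D.del + cm * D.eps + ch * D.lam - D.κ i) ≠ 0 :=
  hgen.sigma_ne_zero 0 0 0 0 cn cm ch (Pi.single i (-1)) 0 (by simp)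
    (by simp [Pi.single_apply, sub_eq_add_neg])

theorem sigma_add_κ'_ne_zero (hgen : D.Generic extra) (cn cm ch : ℤ) (j : Fin N') :
    D.L.sigma (cn * D.del + cm * D.eps + ch * D.lam + D.κ' j) ≠ 0 :=
  hgen.sigma_ne_zero 0 0 0 0 cn cm ch 0 (Pi.single j 1) (by simp) (by simp [Pi.single_apply])

theorem sigma_κ_add_κ'_ne_zero (hgen : D.Generic extra) (i : Fin N) (j : Fin N') :
    D.L.sigma (D.κ i + D.κ' j) ≠ 0 :=
  hgen.sigma_ne_zero 0 0 0 0 0 0 0 (Pi.single i 1) (Pi.single j 1) (by simp)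
    (by simp [Pi.single_apply])

theorem isGenericShift (hgen : D.Generic extra) (n m h : ℤ) :
    D.L.IsGenericShift (D.xi n m h + D.lam) ![D.del, D.eps] ![D.lam, 0] where
  base := hgen.sigma_ne_zero n m h 1 0 0 1 0 0 (by simp) (by simp)
  single := by
    simp only [Fin.forall_fin_two, cons_val_zero, cons_val_one]
    exact ⟨⟨hgen.sigma_ne_zero n m h 1 1 0 0 0 0 (by simp) (by simp; ring),
      hgen.sigma_ne_zero n m h 1 1 0 1 0 0 (by simp) (by simp; ring)⟩,
      hgen.sigma_ne_zero n m h 1 0 1 0 0 0 (by simp) (by simp; ring),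
      hgen.sigma_ne_zero n m h 1 0 1 1 0 0 (by simp) (by simp; ring)⟩
  double := hgen.sigma_ne_zero n m h 1 1 1 0 0 0 (by simp) (by simp; ring)
  sub := by
    simp only [Fin.forall_fin_two, cons_val_zero, cons_val_one]
    exact ⟨⟨hgen.sigma_ne_zero n m h 0 1 0 (-1) 0 0 (by simp) (by simp; ring),
      hgen.sigma_ne_zero n m h 0 1 0 0 0 0 (by simp) (by simp)⟩,
      hgen.sigma_ne_zero n m h 0 0 1 (-1) 0 0 (by simp) (by simp; ring),
      hgen.sigma_ne_zero n m h 0 0 1 0 0 0 (by simp) (by simp)⟩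
  source := hgen.sigma_ne_zero n m h 0 1 (-1) 0 0 0 (by simp) (by simp; ring)
  target := hgen.sigma_ne_zero n m h 0 0 0 1 0 0 (by simp) (by simp)

theorem Phi_zpow_add_one_mul (hgen : D.Generic extra) {d : ℂ} (cn cm ch : ℤ)
    (hne : ¬(cn = 0 ∧ cm = 0 ∧ ch = 0)) (hd : d = cn * D.del + cm * D.eps + ch * D.lam) (k : ℤ)
    (i : Fin N) (j : Fin N') :
    D.L.Phi d (-D.κ i) ^ (k + 1) * D.L.Phi d (D.κ' j) ^ (-(k + 1)) =
      D.L.Phi d (-D.κ i) ^ k * D.L.Phi d (D.κ' j) ^ (-k) *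
        D.L.shiftFactor d 0 (D.κ i) (D.κ' j) := by
  refine D.L.Phi_zpow_add_one_mul
    (hgen.sigma_ne_zero 0 0 0 0 cn cm ch 0 0 (by simpa using hne) (by simpa using hd))
    (by simpa using hgen.sigma_sub_κ_ne_zero 0 0 0 i)
    (by simpa using hgen.sigma_add_κ'_ne_zero 0 0 0 j) ?_ ?_ k
  · rw [hd]
    exact hgen.sigma_sub_κ_ne_zero cn cm ch i
  · rw [hd]
    exact hgen.sigma_add_κ'_ne_zero cn cm ch j

variable (n m h : ℤ) (i : Fin N) (j : Fin N')

theorem weight_add_one_left (hgen : D.Generic extra) :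
    D.rowWeight (n + 1) m h i * D.colWeight (n + 1) m h j =
      D.rowWeight n m h i * D.colWeight n m h j * D.L.shiftFactor D.del 0 (D.κ i) (D.κ' j) := by
  have hstep := hgen.Phi_zpow_add_one_mul (d := D.del) 1 0 0 (by simp) (by simp) n i j
  simp only [rowWeight, colWeight]
  linear_combination D.L.Phi D.eps (-D.κ i) ^ m * D.L.Phi D.lam (-D.κ i) ^ h * D.ρ0 i *
    (D.L.Phi D.eps (D.κ' j) ^ (-m) * D.L.Phi D.lam (D.κ' j) ^ (-h) * D.ν0 j) * hstep

theorem weight_add_one_middle (hgen : D.Generic extra) :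
    D.rowWeight n (m + 1) h i * D.colWeight n (m + 1) h j =
      D.rowWeight n m h i * D.colWeight n m h j * D.L.shiftFactor D.eps 0 (D.κ i) (D.κ' j) := by
  have hstep := hgen.Phi_zpow_add_one_mul (d := D.eps) 0 1 0 (by simp) (by simp) m i j
  simp only [rowWeight, colWeight]
  linear_combination D.L.Phi D.del (-D.κ i) ^ n * D.L.Phi D.lam (-D.κ i) ^ h * D.ρ0 i *
    (D.L.Phi D.del (D.κ' j) ^ (-n) * D.L.Phi D.lam (D.κ' j) ^ (-h) * D.ν0 j) * hstep

theorem weight_add_one_right (hgen : D.Generic extra) :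
    D.rowWeight n m (h + 1) i * D.colWeight n m (h + 1) j =
      D.rowWeight n m h i * D.colWeight n m h j * D.L.shiftFactor D.lam 0 (D.κ i) (D.κ' j) := by
  have hstep := hgen.Phi_zpow_add_one_mul (d := D.lam) 0 0 1 (by simp) (by simp) h i j
  simp only [rowWeight, colWeight]
  linear_combination D.L.Phi D.del (-D.κ i) ^ n * D.L.Phi D.eps (-D.κ i) ^ m * D.ρ0 i *
    (D.L.Phi D.del (D.κ' j) ^ (-n) * D.L.Phi D.eps (D.κ' j) ^ (-m) * D.ν0 j) * hstep

end Generic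

end KPData

theorem elliptic_soliton_hirota_DAGTE_general {N N' : ℕ} (D : KPData N N') (hgen : D.Generic ![])
    (n m h : ℤ) :
    D.L.chi (-D.del) D.eps (D.xi (n + 1) m h) * D.τ n m (h + 1) *
        D.τ (n + 1) (m + 1) h =
      D.L.chi (-D.lam) D.eps (D.xi n m (h + 1)) * D.τ (n + 1) m h *
          D.τ n (m + 1) (h + 1) +
        D.L.chi (-D.del) D.lam (D.xi (n + 1) m h) * D.τ n (m + 1) h *
          D.τ (n + 1) m (h + 1) := by
  simp_rw [KPData.τ_eq_cauchyTau, KPData.xi_add_one_middle, KPData.xi_add_one_left,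
    KPData.xi_add_one_right, hgen.weight_add_one_middle, hgen.weight_add_one_left,
    hgen.weight_add_one_right]
  exact (hgen.isGenericShift n m h).cauchyTau_three_term
    (fun i => by simpa using hgen.sigma_sub_κ_ne_zero 0 0 0 i)
    (fun i => by simpa using hgen.sigma_sub_κ_ne_zero 0 0 1 i)
    (fun j => by simpa using hgen.sigma_add_κ'_ne_zero 1 0 0 j)
    (fun j => by simpa using hgen.sigma_add_κ'_ne_zero 0 1 0 j)
    (fun j => by simpa using hgen.sigma_add_κ'_ne_zero 0 0 1 j)
    hgen.sigma_κ_add_κ'_ne_zero D.C (D.rowWeight n m h) (D.colWeight n m h)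

/-- Elliptic soliton solution of Hirota's bilinear discrete KP equation (DAGTE):
`χ_{−δ,ε}(ξ+δ)·τ̄·τ̂̃ = χ_{−λ,ε}(ξ+λ)·τ̃·τ̂̄ + χ_{−δ,λ}(ξ+δ)·τ̂·τ̃̄`. -/
theorem elliptic_soliton_hirota_DAGTE {N N' : ℕ} (D : KPData N N')
    (hρ0 : ∀ i, D.ρ0 i ≠ 0) (hν0 : ∀ j, D.ν0 j ≠ 0)
    (hgen : D.Generic ![])
    (hInv : ∀ n m h : ℤ, IsUnit ((1 + D.M n m h * D.C).det)) :
    ∀ n m h : ℤ,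
      D.L.chi (-D.del) D.eps (D.xi (n + 1) m h) * D.τ n m (h + 1) *
          D.τ (n + 1) (m + 1) h =
        D.L.chi (-D.lam) D.eps (D.xi n m (h + 1)) * D.τ (n + 1) m h *
            D.τ n (m + 1) (h + 1) +
          D.L.chi (-D.del) D.lam (D.xi (n + 1) m h) * D.τ n (m + 1) h *
            D.τ (n + 1) m (h + 1) :=
  elliptic_soliton_hirota_DAGTE_general D hgen
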